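/- For every n-qudit state ρ, the set Γ = {(p⃗,q⃗) ∈ V^n : |Ξ_ρ(p⃗,q⃗)| = 1} is a subgroup of V^n of order d^r for some 0 ≤ r ≤ n, the Weyl operators {w(p⃗,q⃗) : (p⃗,q⃗) ∈ Γ} mutually commute, and the mean state M(ρ) is a minimal stabilizer-projection state; in particular M(ρ) is positive semidefinite with trace 1. -/

import Mathlib

open scoped BigOperators ComplexOrder Classical ENNReal
open Matrix

namespace PaperQI

/-- The computational-basis index set `ℤ_d^n` for an `n`-qudit system. -/
abbrev QV (d n : ℕ) := Fin n → ZMod d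

/-- Matrices (linear operators) on the `n`-qudit Hilbert space `(ℂ^d)^{⊗ n}`,
written in the computational basis indexed by `ℤ_d^n`. -/
abbrev Mat (d n : ℕ) := Matrix (QV d n) (QV d n) ℂ

/-- The character `ξ^z = exp(2πi z/d)` for `z ∈ ℤ_d`. -/
noncomputable def ch (d : ℕ) (z : ZMod d) : ℂ :=
  Complex.exp (2 * Real.pi * Complex.I * (z.val : ℂ) / (d : ℂ))

/-- Dot product on `ℤ_d^n`. -/
def qdot {d n : ℕ} (p k : QV d n) : ZMod d := ∑ i, p i * k i

/-- The `n`-qudit Weyl operator `w(p,q) = ⊗_i ξ^{-2⁻¹ p_i q_i} Z^{p_i} X^{q_i}`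
(for odd prime `d`).  Its matrix entries are
`w(p,q)[k+q, k] = ξ^{p·k + 2⁻¹ p·q}`. -/
noncomputable def weyl (d n : ℕ) [Fact (Nat.Prime d)] (p q : QV d n) : Mat d n :=
  Matrix.of fun k' k =>
    if k' = k + q then ch d (qdot p k + (2 : ZMod d)⁻¹ * qdot p q) else 0

/-- `ρ` is an `n`-qudit state: positive semidefinite with trace one. -/
def IsState (d n : ℕ) [Fact (Nat.Prime d)] (ρ : Mat d n) : Prop :=
  ρ.PosSemidef ∧ ρ.trace = 1

/-- The characteristic function `Ξ_ρ(p,q) = Tr[ρ w(-p,-q)]`. -/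
noncomputable def xi (d n : ℕ) [Fact (Nat.Prime d)] (ρ : Mat d n)
    (pq : QV d n × QV d n) : ℂ :=
  (ρ * weyl d n (-pq.1) (-pq.2)).trace

/-- The mean state `M(ρ) = d^{-n} ∑_{|Ξ_ρ(p,q)| = 1} Ξ_ρ(p,q) w(p,q)`. -/
noncomputable def meanState (d n : ℕ) [Fact (Nat.Prime d)] (ρ : Mat d n) : Mat d n :=
  ((d : ℂ) ^ n)⁻¹ •
    ∑ pq : QV d n × QV d n,
      if ‖xi d n ρ pq‖ = 1 then xi d n ρ pq • weyl d n pq.1 pq.2 else 0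

/-- `ρ` is a minimal stabilizer-projection state (MSPS): for some `r ≤ n` there are
mutually commuting Weyl operators `w(p_i,q_i)`, `i = 1,…,r`, whose labels generate a
subgroup of `V^n` of order `d^r`, and phases `x ∈ ℤ_d^r`, such that
`ρ = d^{-(n-r)} ∏_i ( (1/d) ∑_{k ∈ ℤ_d} (ξ^{x_i} w(p_i,q_i))^k )`. -/
noncomputable def IsMSPS (d n : ℕ) [Fact (Nat.Prime d)] (ρ : Mat d n) : Prop :=
  ∃ r : ℕ, r ≤ n ∧
    ∃ (p q : Fin r → QV d n) (x : Fin r → ZMod d),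
      (∀ i j, Commute (weyl d n (p i) (q i)) (weyl d n (p j) (q j))) ∧
      Nat.card (AddSubgroup.closure (Set.range fun i => (p i, q i)) :
        AddSubgroup (QV d n × QV d n)) = d ^ r ∧
      ρ = ((d : ℂ) ^ (n - r))⁻¹ •
        (List.ofFn fun i =>
          (d : ℂ)⁻¹ • ∑ k : ZMod d, (ch d (x i) • weyl d n (p i) (q i)) ^ k.val).prod

/-- The magic gap `MG(ρ) = 1 - max{|Ξ_ρ(p,q)| : Ξ_ρ(p,q) ≠ 0, |Ξ_ρ(p,q)| ≠ 1}`,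
and `MG(ρ) = 0` if this set is empty. -/
noncomputable def magicGap (d n : ℕ) [Fact (Nat.Prime d)] (ρ : Mat d n) : ℝ :=
  let s : Finset ℝ :=
    (Finset.univ.filter fun pq : QV d n × QV d n =>
      xi d n ρ pq ≠ 0 ∧ ‖xi d n ρ pq‖ ≠ 1).image
      fun pq => ‖xi d n ρ pq‖
  if h : s.Nonempty then 1 - s.max' h else 0

/-- Von Neumann entropy `H(ρ) = -∑ λ_i log λ_i` (natural log, eigenvalues of `ρ`),
with the convention `0 log 0 = 0`; junk value `0` on non-Hermitian matrices. -/
noncomputable def vnEnt {d n : ℕ} [Fact (Nat.Prime d)] (ρ : Mat d n) : ℝ :=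
  if h : ρ.IsHermitian then -∑ i, h.eigenvalues i * Real.log (h.eigenvalues i) else 0

/-- Rényi entropy `H_α` for `α ∈ [0,∞]`:  `H_0 = log rank`, `H_1 = H` (von Neumann),
`H_∞ = -log λ_max`, and `H_α = (1-α)⁻¹ log ∑ λ_i^α` otherwise. -/
noncomputable def renyiEnt {d n : ℕ} [Fact (Nat.Prime d)] (α : ℝ≥0∞) (ρ : Mat d n) : ℝ :=
  if h : ρ.IsHermitian then
    if α = 0 then Real.log (ρ.rank : ℝ)
    else if α = 1 then -∑ i, h.eigenvalues i * Real.log (h.eigenvalues i)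
    else if α = ⊤ then -Real.log (⨆ i, h.eigenvalues i)
    else (1 - α.toReal)⁻¹ * Real.log (∑ i, h.eigenvalues i ^ α.toReal)
  else 0

/-- Matrix logarithm on the support: `log ρ = U diag(log λ_i) U†` via the spectral
decomposition, with `log 0 = 0` on the kernel; junk value `0` off Hermitian matrices. -/
noncomputable def matLog {d n : ℕ} [Fact (Nat.Prime d)] (ρ : Mat d n) : Mat d n :=
  if h : ρ.IsHermitian then
    (h.eigenvectorUnitary : Mat d n) *
      Matrix.diagonal (fun i => (Real.log (h.eigenvalues i) : ℂ)) *
      star (h.eigenvectorUnitary : Mat d n)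
  else 0

/-- Matrix real power on the support: `ρ^t = U diag(λ_i^t) U†`, with `0^t = 0` on the
kernel (for `t ≠ 0`); junk value `0` off Hermitian matrices. -/
noncomputable def matRpow {d n : ℕ} [Fact (Nat.Prime d)] (ρ : Mat d n) (t : ℝ) : Mat d n :=
  if h : ρ.IsHermitian then
    (h.eigenvectorUnitary : Mat d n) *
      Matrix.diagonal (fun i => ((h.eigenvalues i ^ t : ℝ) : ℂ)) *
      star (h.eigenvectorUnitary : Mat d n)
  else 0

/-- Support inclusion `supp ρ ⊆ supp σ`, expressed as `ker σ ⊆ ker ρ`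
(the correct notion for positive semidefinite matrices). -/
def suppLE {d n : ℕ} [Fact (Nat.Prime d)] (ρ σ : Mat d n) : Prop :=
  ∀ v : QV d n → ℂ, σ.mulVec v = 0 → ρ.mulVec v = 0

/-- Relative entropy `D(ρ‖σ) = Tr[ρ(log ρ - log σ)]` when `supp ρ ⊆ supp σ`, else `+∞`. -/
noncomputable def relEnt {d n : ℕ} [Fact (Nat.Prime d)] (ρ σ : Mat d n) : EReal :=
  if suppLE ρ σ then (((ρ * (matLog ρ - matLog σ)).trace.re : ℝ) : EReal) else ⊤

/-- Sandwiched Rényi relative entropy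
`D_α(ρ‖σ) = (α-1)⁻¹ log Tr[(σ^{(1-α)/(2α)} ρ σ^{(1-α)/(2α)})^α]` for `α ≠ 1`
(with `+∞` when `supp ρ ⊄ supp σ`), and `D_1 = D` the relative entropy. -/
noncomputable def sandRenyi {d n : ℕ} [Fact (Nat.Prime d)] (α : ℝ) (ρ σ : Mat d n) :
    EReal :=
  if α = 1 then relEnt ρ σ
  else if suppLE ρ σ then
    let x : ℝ := (α - 1)⁻¹ * Real.log
      ((matRpow (matRpow σ ((1 - α) / (2 * α)) * ρ * matRpow σ ((1 - α) / (2 * α)))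
        α).trace.re)
    (x : EReal)
  else ⊤

/-- The key unitary `U|i,j⟩ = |N g₁₁ i - N g₁₀ j, -N g₀₁ i + N g₀₀ j⟩`,
where `N = (det G)⁻¹` in `ℤ_d`. -/
noncomputable def convU (d n : ℕ) [Fact (Nat.Prime d)] (g00 g01 g10 g11 : ZMod d) :
    Matrix (QV d n × QV d n) (QV d n × QV d n) ℂ :=
  Matrix.of fun kl ij =>
    if kl = ((fun a => (g00 * g11 - g01 * g10)⁻¹ * g11 * ij.1 a
                      - (g00 * g11 - g01 * g10)⁻¹ * g10 * ij.2 a : QV d n),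
             (fun a => -((g00 * g11 - g01 * g10)⁻¹ * g01) * ij.1 a
                      + (g00 * g11 - g01 * g10)⁻¹ * g00 * ij.2 a : QV d n))
    then 1 else 0

/-- Tensor (Kronecker) product of two `n`-qudit operators, on the doubled system. -/
def kron {d n : ℕ} (ρ σ : Mat d n) : Matrix (QV d n × QV d n) (QV d n × QV d n) ℂ :=
  Matrix.of fun ij kl => ρ ij.1 kl.1 * σ ij.2 kl.2

/-- Partial trace over the second `n`-qudit factor. -/
noncomputable def ptrB {d n : ℕ} [Fact (Nat.Prime d)]
    (M : Matrix (QV d n × QV d n) (QV d n × QV d n) ℂ) : Mat d n :=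
  Matrix.of fun i i' => ∑ j : QV d n, M (i, j) (i', j)

/-- The convolution `ρ ⊠ σ = Tr_B[U (ρ ⊗ σ) U†]` with parameter matrix
`G = [g₀₀, g₀₁; g₁₀, g₁₁]`. -/
noncomputable def conv (d n : ℕ) [Fact (Nat.Prime d)] (g00 g01 g10 g11 : ZMod d)
    (ρ σ : Mat d n) : Mat d n :=
  ptrB (convU d n g00 g01 g10 g11 * kron ρ σ * (convU d n g00 g01 g10 g11)ᴴ)

/-- The beam-splitter unitary `U_{s,t}|i,j⟩ = |s i + t j, t i - s j⟩`. -/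
noncomputable def bsU (d n : ℕ) [Fact (Nat.Prime d)] (s t : ZMod d) :
    Matrix (QV d n × QV d n) (QV d n × QV d n) ℂ :=
  Matrix.of fun kl ij =>
    if kl = ((fun a => s * ij.1 a + t * ij.2 a : QV d n),
             (fun a => t * ij.1 a - s * ij.2 a : QV d n))
    then 1 else 0

/-- The beam-splitter convolution `ρ ⊠_{s,t} σ = Tr_B[U_{s,t} (ρ ⊗ σ) U_{s,t}†]`. -/
noncomputable def bsConv (d n : ℕ) [Fact (Nat.Prime d)] (s t : ZMod d)
    (ρ σ : Mat d n) : Mat d n :=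
  ptrB (bsU d n s t * kron ρ σ * (bsU d n s t)ᴴ)

/-- Iterated self-convolution: `⊠^0 ρ = ρ` and `⊠^{N+1} ρ = (⊠^N ρ) ⊠ ρ`. -/
noncomputable def bsIter (d n : ℕ) [Fact (Nat.Prime d)] (s t : ZMod d) :
    ℕ → Mat d n → Mat d n
  | 0, ρ => ρ
  | N + 1, ρ => bsConv d n s t (bsIter d n s t N ρ) ρ

/-- `ρ` is the pure stabilizer state `|ψ⟩⟨ψ|` with stabilizer label group `S ⊆ V^n`:
`S` has order `d^n` and `ψ` is a common eigenvector of all `w(p,q)`, `(p,q) ∈ S`. -/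
noncomputable def IsPureStabilizerWithGroup (d n : ℕ) [Fact (Nat.Prime d)]
    (ρ : Mat d n) (S : AddSubgroup (QV d n × QV d n)) : Prop :=
  Nat.card S = d ^ n ∧
    ∃ ψ : QV d n → ℂ, ψ ≠ 0 ∧
      ρ = Matrix.of (fun a b => ψ a * starRingEnd ℂ (ψ b)) ∧
      ∀ pq ∈ S, ∃ c : ℂ, (weyl d n pq.1 pq.2).mulVec ψ = c • ψ

/-- `ρ` is a pure stabilizer state. -/
noncomputable def IsPureStabilizer (d n : ℕ) [Fact (Nat.Prime d)] (ρ : Mat d n) : Prop :=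
  ∃ S : AddSubgroup (QV d n × QV d n), IsPureStabilizerWithGroup d n ρ S

/-- `ρ` is a stabilizer state: a convex combination of pure stabilizer states. -/
noncomputable def IsStabilizerState (d n : ℕ) [Fact (Nat.Prime d)] (ρ : Mat d n) : Prop :=
  ∃ (m : ℕ) (p : Fin m → ℝ) (τ : Fin m → Mat d n),
    (∀ i, 0 ≤ p i) ∧ ∑ i, p i = 1 ∧ (∀ i, IsPureStabilizer d n (τ i)) ∧
    ρ = ∑ i, (p i : ℂ) • τ i

/-- `U` is a Clifford unitary: a unitary mapping each Weyl operator, under conjugation,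
to a complex phase times a Weyl operator. -/
noncomputable def IsClifford (d n : ℕ) [Fact (Nat.Prime d)] (U : Mat d n) : Prop :=
  U ∈ Matrix.unitaryGroup (QV d n) ℂ ∧
    ∀ pq : QV d n × QV d n, ∃ (c : ℂ) (pq' : QV d n × QV d n),
      ‖c‖ = 1 ∧ U * weyl d n pq.1 pq.2 * Uᴴ = c • weyl d n pq'.1 pq'.2

/-- The divergence-based quantum Fisher information `J(ρ; H) = Tr[ρ [H,[H, log ρ]]]`. -/
noncomputable def fisherJ {d n : ℕ} [Fact (Nat.Prime d)] (ρ H : Mat d n) : ℝ :=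
  (ρ * (H * (H * matLog ρ - matLog ρ * H) - (H * matLog ρ - matLog ρ * H) * H)).trace.re

/-- Embed a single-qudit operator at site `k` of an `n`-qudit system
(tensored with the identity elsewhere). -/
noncomputable def embedAt (d n : ℕ) (k : Fin n) (M : Matrix (ZMod d) (ZMod d) ℂ) :
    Mat d n :=
  Matrix.of fun v w => if ∀ i, i ≠ k → v i = w i then M (v k) (w k) else 0

/-- The rank-one projection `H_j^Z = |j⟩⟨j|` onto the eigenvector of `Z`
with eigenvalue `ξ^j`. -/
noncomputable def projZ (d : ℕ) (j : ZMod d) : Matrix (ZMod d) (ZMod d) ℂ :=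
  Matrix.of fun a b => if a = j ∧ b = j then 1 else 0

/-- The rank-one projection `H_j^X` onto the eigenvector of `X` with eigenvalue `ξ^j`;
its entries are `(H_j^X)_{a b} = d⁻¹ ξ^{j(b-a)}`. -/
noncomputable def projX (d : ℕ) (j : ZMod d) : Matrix (ZMod d) (ZMod d) ℂ :=
  Matrix.of fun a b => (d : ℂ)⁻¹ * ch d (j * (b - a))

/-- Total Fisher information
`J(ρ) = ∑_{k=1}^n ∑_{j ∈ ℤ_d} J(ρ; H_j^{X_k}) + J(ρ; H_j^{Z_k})`. -/
noncomputable def fisherTotal (d n : ℕ) [Fact (Nat.Prime d)] (ρ : Mat d n) : ℝ :=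
  ∑ k : Fin n, ∑ j : ZMod d,
    (fisherJ ρ (embedAt d n k (projX d j)) + fisherJ ρ (embedAt d n k (projZ d j)))

/-- Holevo capacity of a channel `E`:
`χ(E) = sup H(∑ p_i E(ρ_i)) - ∑ p_i H(E(ρ_i))` over finite ensembles of states. -/
noncomputable def holevoCap (d n : ℕ) [Fact (Nat.Prime d)] (E : Mat d n → Mat d n) : ℝ :=
  ⨆ m : ℕ, ⨆ p : Fin m → ℝ, ⨆ ρs : Fin m → Mat d n,
    ⨆ _ : (∀ i, 0 ≤ p i) ∧ ∑ i, p i = 1 ∧ ∀ i, IsState d n (ρs i),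
      (vnEnt (∑ i, (p i : ℂ) • E (ρs i)) - ∑ i, p i * vnEnt (E (ρs i)))

/-- Hilbert–Schmidt norm `‖A‖₂ = (Tr[A†A])^{1/2}`. -/
noncomputable def hsNorm {d n : ℕ} [Fact (Nat.Prime d)] (A : Mat d n) : ℝ :=
  Real.sqrt ((Aᴴ * A).trace.re)

/-- Trace norm `‖A‖₁ = Tr[(A†A)^{1/2}]`. -/
noncomputable def trNorm {d n : ℕ} [Fact (Nat.Prime d)] (A : Mat d n) : ℝ :=
  (matRpow (Aᴴ * A) (2⁻¹ : ℝ)).trace.re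

/-- Tensor product of an `n₁`-qudit operator with an `n₂`-qudit operator,
as an `(n₁+n₂)`-qudit operator. -/
def tensorMat (d n₁ n₂ : ℕ) (ρ₁ : Mat d n₁) (ρ₂ : Mat d n₂) : Mat d (n₁ + n₂) :=
  Matrix.of fun v w =>
    ρ₁ (fun i => v (Fin.castAdd n₂ i)) (fun i => w (Fin.castAdd n₂ i)) *
    ρ₂ (fun j => v (Fin.natAdd n₁ j)) (fun j => w (Fin.natAdd n₁ j))

/-! ### Qubit (`d = 2`) specific definitions -/

/-- The `n`-qubit Weyl (Pauli) operator `w(p,q) = ⊗_i i^{-p_i q_i} Z^{p_i} X^{q_i}`. -/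
noncomputable def weyl2 (n : ℕ) (p q : Fin n → ZMod 2) :
    Matrix (Fin n → ZMod 2) (Fin n → ZMod 2) ℂ :=
  Matrix.of fun k' k =>
    if k' = k + q then
      ∏ i, ((-Complex.I) ^ ((p i).val * (q i).val) *
        (-1 : ℂ) ^ ((p i * (k i + q i)).val))
    else 0

/-- The `n`-qubit characteristic function `Ξ_ρ(p,q) = Tr[ρ w(p,q)†]`. -/
noncomputable def xi2 (n : ℕ) (ρ : Matrix (Fin n → ZMod 2) (Fin n → ZMod 2) ℂ)
    (pq : (Fin n → ZMod 2) × (Fin n → ZMod 2)) : ℂ :=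
  (ρ * (weyl2 n pq.1 pq.2)ᴴ).trace

/-- The logarithmic magic gap
`LMG(ρ) = -log₂ max{|Ξ_ρ(p,q)| : Ξ_ρ(p,q) ≠ 0, |Ξ_ρ(p,q)| ≠ 1}` (`0` if the set is
empty). -/
noncomputable def lmg (n : ℕ) (ρ : Matrix (Fin n → ZMod 2) (Fin n → ZMod 2) ℂ) : ℝ :=
  let s : Finset ℝ :=
    (Finset.univ.filter fun pq : (Fin n → ZMod 2) × (Fin n → ZMod 2) =>
      xi2 n ρ pq ≠ 0 ∧ ‖xi2 n ρ pq‖ ≠ 1).image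
      fun pq => ‖xi2 n ρ pq‖
  if h : s.Nonempty then -Real.logb 2 (s.max' h) else 0

/-- `U` is an `n`-qubit Clifford unitary. -/
noncomputable def IsClifford2 (n : ℕ) (U : Matrix (Fin n → ZMod 2) (Fin n → ZMod 2) ℂ) :
    Prop :=
  U ∈ Matrix.unitaryGroup (Fin n → ZMod 2) ℂ ∧
    ∀ pq : (Fin n → ZMod 2) × (Fin n → ZMod 2),
      ∃ (c : ℂ) (pq' : (Fin n → ZMod 2) × (Fin n → ZMod 2)),
        ‖c‖ = 1 ∧ U * weyl2 n pq.1 pq.2 * Uᴴ = c • weyl2 n pq'.1 pq'.2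

/-- The T gate `diag(1, e^{iπ/4})` acting on qubit `k` of an `n`-qubit system. -/
noncomputable def tGateAt (n : ℕ) (k : Fin n) :
    Matrix (Fin n → ZMod 2) (Fin n → ZMod 2) ℂ :=
  embedAt 2 n k (Matrix.of fun a b =>
    if a = b then (if a = 0 then 1 else Complex.exp (Real.pi * Complex.I / 4)) else 0)

/-- An `n`-qubit state: positive semidefinite with trace one. -/
def IsState2 (n : ℕ) (ρ : Matrix (Fin n → ZMod 2) (Fin n → ZMod 2) ℂ) : Prop :=
  ρ.PosSemidef ∧ ρ.trace = 1

end PaperQI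

namespace PaperQI

section Helpers

variable {d n : ℕ} [Fact (Nat.Prime d)]

/-- The symplectic form on labels. -/
def omg (u v : QV d n × QV d n) : ZMod d := qdot u.1 v.2 - qdot v.1 u.2

/-- The Weyl operator of a label pair. -/
noncomputable def W (u : QV d n × QV d n) : Mat d n := weyl d n u.1 u.2

theorem ch_eq (z : ZMod d) : ch d z = ZMod.stdAddChar z := by
  rw [ZMod.stdAddChar_apply, ZMod.toCircle_apply, ch]

theorem ch_add (a b : ZMod d) : ch d (a + b) = ch d a * ch d b := by
  simp only [ch_eq, AddChar.map_add_eq_mul]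

theorem ch_zero : ch d (0 : ZMod d) = 1 := by
  simp only [ch_eq, AddChar.map_zero_eq_one]

theorem ch_inj {a b : ZMod d} (h : ch d a = ch d b) : a = b := by
  simp only [ch_eq] at h
  exact ZMod.injective_stdAddChar h

theorem ch_norm (a : ZMod d) : ‖ch d a‖ = 1 := by
  rw [ch_eq, ZMod.stdAddChar_apply]
  exact Circle.norm_coe _

theorem ch_star (a : ZMod d) : star (ch d a) = ch d (-a) := by
  have h1 : ch d a * ch d (-a) = 1 := by rw [← ch_add, add_neg_cancel, ch_zero]
  have h2 : ch d a * star (ch d a) = 1 := by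
    have := Complex.mul_conj (ch d a)
    rw [Complex.normSq_eq_norm_sq, ch_norm] at this
    simpa using this
  have h0 : ch d a ≠ 0 := left_ne_zero_of_mul_eq_one h1
  exact mul_left_cancel₀ h0 (h2.trans h1.symm)

theorem ch_surj {c : ℂ} (h : c ^ d = 1) : ∃ x : ZMod d, ch d x = c := by
  have hd0 : d ≠ 0 := (Fact.out : d.Prime).ne_zero
  obtain ⟨i, hi, e⟩ := (Complex.isPrimitiveRoot_exp d hd0).eq_pow_of_pow_eq_one h
  refine ⟨(i : ZMod d), ?_⟩
  rw [ch, ZMod.val_natCast, Nat.mod_eq_of_lt hi, ← e, ← Complex.exp_nat_mul]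
  congr 1
  ring

theorem qdot_add_left (p p' k : QV d n) : qdot (p + p') k = qdot p k + qdot p' k := by
  simp [qdot, add_mul, Finset.sum_add_distrib]

theorem qdot_add_right (p k k' : QV d n) : qdot p (k + k') = qdot p k + qdot p k' := by
  simp [qdot, mul_add, Finset.sum_add_distrib]

theorem qdot_neg_left (p k : QV d n) : qdot (-p) k = - qdot p k := by
  simp [qdot]

theorem qdot_neg_right (p k : QV d n) : qdot p (-k) = - qdot p k := by
  simp [qdot]

theorem qdot_smul_left (c : ZMod d) (p k : QV d n) : qdot (c • p) k = c * qdot p k := by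
  simp [qdot, Finset.mul_sum, mul_assoc]

theorem qdot_smul_right (c : ZMod d) (p k : QV d n) : qdot p (c • k) = c * qdot p k := by
  simp [qdot, Finset.mul_sum, mul_left_comm]

theorem two_ne (hd : Odd d) : (2 : ZMod d) ≠ 0 := by
  intro h
  have h2 : ((2 : ℕ) : ZMod d) = 0 := by exact_mod_cast h
  rw [ZMod.natCast_eq_zero_iff] at h2
  have hp : d.Prime := Fact.out
  have := (Nat.prime_dvd_prime_iff_eq hp Nat.prime_two).1 h2
  subst this
  exact absurd hd (by decide)

theorem W_mul (hd : Odd d) (u v : QV d n × QV d n) :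
    W u * W v = ch d ((2 : ZMod d)⁻¹ * omg u v) • W (u + v) := by
  have h2 : (2 : ZMod d)⁻¹ + (2 : ZMod d)⁻¹ = 1 := by
    rw [← two_mul, mul_inv_cancel₀ (two_ne hd)]
  ext a b
  rw [Matrix.mul_apply]
  simp only [W, weyl, Matrix.of_apply, Matrix.smul_apply, smul_eq_mul]
  rw [Finset.sum_eq_single (b + v.2)]
  · rw [if_pos rfl]
    have e : b + v.2 + u.2 = b + (u + v).2 := by
      rw [Prod.snd_add]; abel
    rw [e]
    split_ifs with h
    · rw [← ch_add, ← ch_add]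
      congr 1
      simp only [Prod.fst_add, Prod.snd_add, omg, qdot_add_left, qdot_add_right]
      linear_combination (-(qdot u.1 v.2)) * h2
    · simp
  · intro c _ hc
    rw [if_neg hc, mul_zero]
  · simp

theorem W_zero : W (0 : QV d n × QV d n) = 1 := by
  ext a b
  simp [W, weyl, qdot, ch_zero, Matrix.one_apply]

theorem omg_neg_right (u v : QV d n × QV d n) : omg u (-v) = - omg u v := by
  simp [omg, qdot_neg_left, qdot_neg_right]; ring

theorem omg_neg_left (u v : QV d n × QV d n) : omg (-u) v = - omg u v := by
  simp [omg, qdot_neg_left, qdot_neg_right]; ring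

theorem omg_self (u : QV d n × QV d n) : omg u u = 0 := by
  simp [omg]

theorem omg_swap (u v : QV d n × QV d n) : omg v u = - omg u v := by
  simp [omg]

theorem W_neg_mul (hd : Odd d) (u : QV d n × QV d n) : W (-u) * W u = 1 := by
  rw [W_mul hd, omg_neg_left, omg_self, neg_add_cancel, W_zero]
  simp [ch_zero]

theorem W_conj (hd : Odd d) (u : QV d n × QV d n) : (W u)ᴴ = W (-u) := by
  ext a b
  simp only [W, weyl, Matrix.conjTranspose_apply, Matrix.of_apply, Prod.fst_neg, Prod.snd_neg]
  have e : (b = a + u.2) ↔ (a = b + -u.2) := by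
    constructor <;> rintro rfl <;> abel
  by_cases h : a = b + -u.2
  · rw [if_pos h, if_pos (e.2 h), ch_star, h]
    congr 1
    simp only [qdot_neg_left, qdot_neg_right, qdot_add_right]
    have h2 : (2 : ZMod d)⁻¹ + (2 : ZMod d)⁻¹ = 1 := by
      rw [← two_mul, mul_inv_cancel₀ (two_ne hd)]
    linear_combination (-(qdot u.1 u.2)) * h2
  · rw [if_neg h, if_neg (fun h' => h (e.1 h')), star_zero]

theorem omg_nondeg {u : QV d n × QV d n} (h : ∀ v, omg u v = 0) : u = 0 := by
  ext i
  · have := h (0, Pi.single i 1)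
    simpa [omg, qdot, Pi.single_apply] using this
  · have := h (Pi.single i 1, 0)
    simpa [omg, qdot, Pi.single_apply] using this

theorem W_trace (hd : Odd d) {u : QV d n × QV d n} (hu : u ≠ 0) : (W u).trace = 0 := by
  by_contra ht
  apply hu
  apply omg_nondeg
  intro v
  have e : W v * W u = ch d (omg v u) • (W u * W v) := by
    rw [W_mul hd, W_mul hd, smul_smul, ← ch_add, add_comm v u]
    congr 2
    have h2 : (2 : ZMod d)⁻¹ + (2 : ZMod d)⁻¹ = 1 := by
      rw [← two_mul, mul_inv_cancel₀ (two_ne hd)]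
    rw [omg_swap u v]
    linear_combination (-(omg u v)) * h2
  have e2 : W u = ch d (omg v u) • (W (-v) * (W u * W v)) := by
    rw [← Matrix.mul_smul, ← e, ← mul_assoc, W_neg_mul hd, one_mul]
  have e3 := congrArg Matrix.trace e2
  have h4 : W v * W (-v) = (1 : Mat d n) := by
    simpa using W_neg_mul hd (-v)
  rw [Matrix.trace_smul, Matrix.trace_mul_comm, mul_assoc, h4, mul_one, smul_eq_mul] at e3
  have : ch d (omg v u) = ch d 0 := by
    rw [ch_zero]
    exact mul_right_cancel₀ ht (by rw [← e3, one_mul])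
  have := ch_inj this
  rw [omg_swap v u, this, neg_zero]

open scoped MatrixOrder Matrix.Norms.L2Operator in
theorem psd_factor {ρ : Mat d n} (hp : ρ.PosSemidef) : ∃ B : Mat d n, ρ = Bᴴ * B := by
  obtain ⟨B, hB⟩ := CStarAlgebra.nonneg_iff_eq_star_mul_self.mp hp.nonneg
  exact ⟨B, hB⟩

/-- Key: unit modulus of the characteristic function means an eigen-relation. -/
theorem key (hd : Odd d) {ρ : Mat d n} (hρ : IsState d n ρ) {u : QV d n × QV d n}
    (hu : ‖xi d n ρ u‖ = 1) : ρ * W (-u) = xi d n ρ u • ρ := by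
  obtain ⟨hp, ht⟩ := hρ
  set c := xi d n ρ u with hc
  have hct : (ρ * W (-u)).trace = c := rfl
  have hcc : star c * c = 1 := by
    have := Complex.conj_mul' c
    rw [hu] at this
    simpa using this
  have hct2 : (ρ * W u).trace = star c := by
    rw [← hct, ← Matrix.trace_conjTranspose, Matrix.conjTranspose_mul, W_conj hd, neg_neg,
      hp.isHermitian.eq, Matrix.trace_mul_comm]
  obtain ⟨B, hB⟩ := psd_factor hp
  set A : Mat d n := 1 - star c • W (-u) with hA
  have hAA : A * Aᴴ = (2 : ℂ) • (1 : Mat d n) - star c • W (-u) - c • W u := by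
    have : Aᴴ = 1 - c • W u := by
      simp [hA, W_conj hd]
    rw [this, hA, sub_mul, mul_sub, one_mul, mul_sub, smul_mul_smul_comm, W_neg_mul hd, hcc,
      two_smul]
    simp
    abel
  have hz : ((B * A) * (B * A)ᴴ).trace = 0 := by
    have : ((B * A) * (B * A)ᴴ).trace = (ρ * (A * Aᴴ)).trace := by
      rw [Matrix.conjTranspose_mul, hB, Matrix.trace_mul_comm]
      rw [Matrix.trace_mul_comm (Bᴴ * B)]
      simp only [← mul_assoc]
      rw [Matrix.trace_mul_comm]
      simp only [← mul_assoc]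
    rw [this, hAA, mul_sub, mul_sub, Matrix.mul_smul, Matrix.mul_smul, Matrix.mul_smul,
      Matrix.trace_sub, Matrix.trace_sub, Matrix.trace_smul, Matrix.trace_smul,
      Matrix.trace_smul, hct, hct2, mul_one, ht]
    simp only [smul_eq_mul]
    linear_combination (-2 : ℂ) * hcc
  have hBA : B * A = 0 := Matrix.trace_mul_conjTranspose_self_eq_zero_iff.1 hz
  have hρA : ρ * A = 0 := by rw [hB, mul_assoc, hBA, mul_zero]
  rw [hA, mul_sub, mul_one, Matrix.mul_smul, sub_eq_zero] at hρA
  conv_rhs => rw [hρA]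
  rw [smul_smul, mul_comm, hcc, one_smul]

theorem xi_mul (hd : Odd d) {ρ : Mat d n} (hρ : IsState d n ρ) {u v : QV d n × QV d n}
    (hu : ‖xi d n ρ u‖ = 1) (hv : ‖xi d n ρ v‖ = 1) :
    xi d n ρ u * xi d n ρ v = ch d ((2 : ZMod d)⁻¹ * omg u v) * xi d n ρ (u + v) := by
  have h1 : ρ * (W (-u) * W (-v)) = (xi d n ρ u * xi d n ρ v) • ρ := by
    rw [← mul_assoc, key hd hρ hu, Matrix.smul_mul, key hd hρ hv, smul_smul]
  rw [W_mul hd, omg_neg_left, omg_neg_right, neg_neg, ← neg_add, Matrix.mul_smul] at h1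
  have h2 := congrArg Matrix.trace h1
  rw [Matrix.trace_smul, Matrix.trace_smul, hρ.2] at h2
  simp only [smul_eq_mul, mul_one] at h2
  exact h2.symm

theorem norm_ne {c : ℂ} (h : ‖c‖ = 1) : c ≠ 0 := by
  rintro rfl
  simp at h

theorem xi_norm_add (hd : Odd d) {ρ : Mat d n} (hρ : IsState d n ρ) {u v : QV d n × QV d n}
    (hu : ‖xi d n ρ u‖ = 1) (hv : ‖xi d n ρ v‖ = 1) : ‖xi d n ρ (u + v)‖ = 1 := by
  have := congrArg norm (xi_mul hd hρ hu hv)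
  rw [norm_mul, norm_mul, hu, hv, ch_norm] at this
  simpa using this.symm

theorem omg_eq_zero (hd : Odd d) {ρ : Mat d n} (hρ : IsState d n ρ) {u v : QV d n × QV d n}
    (hu : ‖xi d n ρ u‖ = 1) (hv : ‖xi d n ρ v‖ = 1) : omg u v = 0 := by
  have h1 := xi_mul hd hρ hu hv
  have h2 := xi_mul hd hρ hv hu
  rw [mul_comm, h1, add_comm v u] at h2
  have h3 := ch_inj (mul_right_cancel₀ (norm_ne (xi_norm_add hd hρ hu hv)) h2)
  rw [omg_swap u v] at h3
  have h4 : (2 : ZMod d)⁻¹ + (2 : ZMod d)⁻¹ = 1 := by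
    rw [← two_mul, mul_inv_cancel₀ (two_ne hd)]
  linear_combination h3 - omg u v * h4

theorem xi_add (hd : Odd d) {ρ : Mat d n} (hρ : IsState d n ρ) {u v : QV d n × QV d n}
    (hu : ‖xi d n ρ u‖ = 1) (hv : ‖xi d n ρ v‖ = 1) :
    xi d n ρ (u + v) = xi d n ρ u * xi d n ρ v := by
  rw [xi_mul hd hρ hu hv, omg_eq_zero hd hρ hu hv, mul_zero, ch_zero, one_mul]

theorem xi_zero {ρ : Mat d n} (hρ : IsState d n ρ) : xi d n ρ 0 = 1 := by
  have : xi d n ρ 0 = (ρ * W (-0)).trace := rfl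
  rw [this, neg_zero, W_zero, mul_one, hρ.2]

theorem xi_neg (hd : Odd d) {ρ : Mat d n} (hρ : IsState d n ρ) (u : QV d n × QV d n) :
    xi d n ρ (-u) = star (xi d n ρ u) := by
  have h1 : xi d n ρ (-u) = (ρ * W (-(-u))).trace := rfl
  have h2 : xi d n ρ u = (ρ * W (-u)).trace := rfl
  rw [h1, h2, ← Matrix.trace_conjTranspose, Matrix.conjTranspose_mul, W_conj hd,
    hρ.1.isHermitian.eq, Matrix.trace_mul_comm]

/-- The group of labels. -/
noncomputable def Gam (hd : Odd d) {ρ : Mat d n} (hρ : IsState d n ρ) :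
    AddSubgroup (QV d n × QV d n) where
  carrier := {pq | ‖xi d n ρ pq‖ = 1}
  add_mem' := fun hu hv => xi_norm_add hd hρ hu hv
  zero_mem' := by simp [xi_zero hρ]
  neg_mem' := fun {u} hu => by
    have hu' : ‖xi d n ρ u‖ = 1 := hu
    simp [xi_neg hd hρ, hu']

/-- The symplectic form as a bilinear form. -/
noncomputable def omgB : LinearMap.BilinForm (ZMod d) (QV d n × QV d n) :=
  LinearMap.mk₂ (ZMod d) omg
    (fun a b c => by simp [omg, qdot_add_left, qdot_add_right]; ring)
    (fun c a b => by simp [omg, qdot_smul_left, qdot_smul_right]; ring)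
    (fun a b c => by simp [omg, qdot_add_left, qdot_add_right]; ring)
    (fun c a b => by simp [omg, qdot_smul_left, qdot_smul_right]; ring)

theorem finrank_le (S : Submodule (ZMod d) (QV d n × QV d n))
    (h : ∀ u ∈ S, ∀ v ∈ S, omg u v = 0) : Module.finrank (ZMod d) S ≤ n := by
  have h1 := LinearMap.BilinForm.finrank_add_finrank_orthogonal' (B := omgB) S
  have hk : LinearMap.ker (omgB : LinearMap.BilinForm (ZMod d) (QV d n × QV d n)) = ⊥ := by
    rw [LinearMap.ker_eq_bot']
    intro u hu
    exact omg_nondeg fun v => by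
      have := LinearMap.congr_fun hu v
      simpa [omgB] using this
  rw [hk, inf_bot_eq, finrank_bot, add_zero] at h1
  have h2 : S ≤ omgB.orthogonal S := by
    intro v hv u hu
    exact h u hu v hv
  have h3 := Submodule.finrank_mono h2
  have h4 : Module.finrank (ZMod d) (QV d n × QV d n) = n + n := by simp
  omega

/-- Terms of the mean state. -/
noncomputable def TT (ρ : Mat d n) (u : QV d n × QV d n) : Mat d n := xi d n ρ u • W u

theorem TT_add (hd : Odd d) {ρ : Mat d n} (hρ : IsState d n ρ) {u v : QV d n × QV d n}
    (hu : ‖xi d n ρ u‖ = 1) (hv : ‖xi d n ρ v‖ = 1) :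
    TT ρ (u + v) = TT ρ u * TT ρ v := by
  rw [TT, TT, TT, xi_add hd hρ hu hv, smul_mul_smul_comm, W_mul hd, omg_eq_zero hd hρ hu hv,
    mul_zero, ch_zero, one_smul]

/-- `TT` as a monoid homomorphism on `Γ`. -/
noncomputable def THom (hd : Odd d) {ρ : Mat d n} (hρ : IsState d n ρ) :
    Multiplicative (AddSubgroup.toZModSubmodule d (Gam hd hρ)) →* Mat d n where
  toFun u := TT ρ (u.toAdd : QV d n × QV d n)
  map_one' := by simp [TT, xi_zero hρ, W_zero]
  map_mul' u v := TT_add hd hρ u.toAdd.2 v.toAdd.2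

theorem mean_eq (hd : Odd d) {ρ : Mat d n} (hρ : IsState d n ρ) :
    meanState d n ρ = ((d : ℂ) ^ n)⁻¹ • ∑ u : AddSubgroup.toZModSubmodule d (Gam hd hρ),
      TT ρ (u : QV d n × QV d n) := by
  rw [meanState]
  congr 1
  rw [← Finset.sum_filter]
  exact Finset.sum_subtype _ (fun x => by simp [Gam]) (fun u => TT ρ u)

theorem prod_smul {r : ℕ} (c : ℂ) (A : Fin r → Mat d n) :
    (List.ofFn fun i => c • A i).prod = c ^ r • (List.ofFn A).prod := by
  induction r with
  | zero => simp
  | succ r ih =>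
    rw [List.ofFn_succ, List.ofFn_succ, List.prod_cons, List.prod_cons, ih, smul_mul_smul_comm,
      pow_succ']

theorem prod_sum_ofFn {r : ℕ} (g : Fin r → ZMod d → Mat d n) :
    (List.ofFn fun i => ∑ k : ZMod d, g i k).prod
      = ∑ f : Fin r → ZMod d, (List.ofFn fun i => g i (f i)).prod := by
  induction r with
  | zero => simp
  | succ r ih =>
    rw [List.ofFn_succ, List.prod_cons, ih, Finset.sum_mul_sum, ← Finset.sum_product']
    refine Fintype.sum_equiv (Fin.consEquiv fun _ => ZMod d) _ _ ?_
    rintro ⟨k, f⟩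
    simp [List.ofFn_succ, Fin.consEquiv]

theorem sum_TT (hd : Odd d) {ρ : Mat d n} (hρ : IsState d n ρ) {r : ℕ}
    (b : Module.Basis (Fin r) (ZMod d) (AddSubgroup.toZModSubmodule d (Gam hd hρ))) :
    ∑ u : AddSubgroup.toZModSubmodule d (Gam hd hρ), TT ρ (u : QV d n × QV d n)
      = (List.ofFn fun i => ∑ k : ZMod d, (TT ρ (b i : QV d n × QV d n)) ^ k.val).prod := by
  rw [prod_sum_ofFn]
  symm
  refine Fintype.sum_equiv b.equivFun.symm.toEquiv _ _ ?_
  intro f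
  have h1 : ∀ i, (TT ρ (b i : QV d n × QV d n)) ^ (f i).val
      = THom hd hρ (Multiplicative.ofAdd (f i • b i)) := by
    intro i
    have e : f i • b i = (f i).val • b i := by
      rw [← Nat.cast_smul_eq_nsmul (ZMod d), ZMod.natCast_zmod_val]
    rw [e, ofAdd_nsmul, map_pow]
    rfl
  simp only [h1]
  have h2 : (List.ofFn fun i => THom hd hρ (Multiplicative.ofAdd (f i • b i))).prod
      = THom hd hρ (∏ i, Multiplicative.ofAdd (f i • b i)) := by
    rw [← List.prod_ofFn, map_list_prod, List.map_ofFn]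
    rfl
  rw [h2, ← ofAdd_sum]
  simp only [LinearEquiv.coe_toEquiv, Module.Basis.equivFun_symm_apply]
  rfl

theorem d_ne : (d : ℂ) ≠ 0 := by
  exact_mod_cast (Fact.out : d.Prime).ne_zero

theorem xi_pow (hd : Odd d) {ρ : Mat d n} (hρ : IsState d n ρ) {u : QV d n × QV d n}
    (hu : ‖xi d n ρ u‖ = 1) : xi d n ρ u ^ d = 1 := by
  have h : ∀ k : ℕ, xi d n ρ (k • u) = xi d n ρ u ^ k := by
    intro k
    induction k with
    | zero => simp [xi_zero hρ]
    | succ k ih =>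
      have hk : ‖xi d n ρ (k • u)‖ = 1 := by rw [ih, norm_pow, hu, one_pow]
      rw [succ_nsmul, xi_add hd hρ hk hu, ih, pow_succ]
  rw [← h d, ← Nat.cast_smul_eq_nsmul (ZMod d), CharP.cast_eq_zero, zero_smul, xi_zero hρ]

theorem isMSPS_mean (hd : Odd d) {ρ : Mat d n} (hρ : IsState d n ρ) :
    IsMSPS d n (meanState d n ρ) := by
  set S := AddSubgroup.toZModSubmodule d (Gam hd hρ) with hS
  have hr : Module.finrank (ZMod d) S ≤ n :=
    finrank_le S fun u hu v hv => omg_eq_zero hd hρ hu hv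
  let b := Module.finBasis (ZMod d) S
  have hb : ∀ i, ‖xi d n ρ (b i : QV d n × QV d n)‖ = 1 := fun i => (b i).2
  choose x hx using fun i => ch_surj (xi_pow hd hρ (hb i))
  refine ⟨Module.finrank (ZMod d) S, hr, fun i => (b i : QV d n × QV d n).1,
    fun i => (b i : QV d n × QV d n).2, x, ?_, ?_, ?_⟩
  · intro i j
    change W (b i : QV d n × QV d n) * W (b j : QV d n × QV d n) = W _ * W _
    rw [W_mul hd, W_mul hd, omg_eq_zero hd hρ (hb i) (hb j), omg_eq_zero hd hρ (hb j) (hb i),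
      add_comm]
  · have hcl : AddSubgroup.closure (Set.range fun i => (b i : QV d n × QV d n)) = Gam hd hρ := by
      apply (AddSubgroup.toZModSubmodule d).injective
      rw [← hS]
      apply le_antisymm
      · change AddSubgroup.closure _ ≤ Gam hd hρ
        rw [AddSubgroup.closure_le]
        rintro _ ⟨i, rfl⟩
        exact (b i).2
      · intro u hu
        have e := b.sum_repr ⟨u, hu⟩
        have e2 : ((∑ i, (b.repr ⟨u, hu⟩) i • b i : S) : QV d n × QV d n) = u :=
          congrArg Subtype.val e
        rw [← e2]
        simp only [AddSubmonoidClass.coe_finsetSum, Submodule.coe_smul]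
        refine Submodule.sum_mem _ fun i _ => Submodule.smul_mem _ _ ?_
        exact AddSubgroup.subset_closure ⟨i, rfl⟩
    have := Module.natCard_eq_pow_finrank (K := ZMod d) (V := S)
    rw [Nat.card_zmod] at this
    rw [← this]
    change Nat.card (AddSubgroup.closure (Set.range fun i => (b i : QV d n × QV d n))) = _
    rw [hcl]
    rfl
  · rw [mean_eq hd hρ, sum_TT hd hρ b, prod_smul, smul_smul]
    congr 1
    · rw [inv_pow, ← mul_inv, ← pow_add, Nat.sub_add_cancel hr]
    · congr 2
      funext i
      rw [hx i]
      rfl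

theorem mean_trace (hd : Odd d) {ρ : Mat d n} (hρ : IsState d n ρ) :
    (meanState d n ρ).trace = 1 := by
  rw [mean_eq hd hρ, Matrix.trace_smul, Matrix.trace_sum, Finset.sum_eq_single 0]
  · have : (d : ℂ) ^ n ≠ 0 := pow_ne_zero _ d_ne
    simp [TT, xi_zero hρ, W_zero, Matrix.trace_one, this]
  · intro u _ hu
    rw [TT, Matrix.trace_smul, W_trace hd, smul_zero]
    simpa using hu
  · simp

theorem mean_psd (hd : Odd d) {ρ : Mat d n} (hρ : IsState d n ρ) :
    (meanState d n ρ).PosSemidef := by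
  rw [mean_eq hd hρ]
  set S := AddSubgroup.toZModSubmodule d (Gam hd hρ) with hS
  set M : Mat d n := ∑ u : S, TT ρ (u : QV d n × QV d n) with hM
  have h1 : Mᴴ = M := by
    rw [hM, Matrix.conjTranspose_sum]
    refine Fintype.sum_equiv (Equiv.neg S) _ _ fun u => ?_
    simp [TT, Matrix.conjTranspose_smul, W_conj hd, xi_neg hd hρ]
  have h2 : M * M = (Fintype.card S : ℂ) • M := by
    have : ∀ u : S, TT ρ (u : QV d n × QV d n) * M = M := by
      intro u
      rw [hM, Finset.mul_sum]
      refine Fintype.sum_equiv (Equiv.addLeft u) _ _ fun v => ?_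
      exact (TT_add hd hρ u.2 v.2).symm
    calc M * M = ∑ u : S, TT ρ (u : QV d n × QV d n) * M := Finset.sum_mul _ _ _
      _ = ∑ _u : S, M := Finset.sum_congr rfl fun u _ => this u
      _ = _ := by
        rw [Finset.sum_const, Finset.card_univ, Nat.cast_smul_eq_nsmul]
  have h3 : (Fintype.card S : ℂ) ≠ 0 := by
    exact_mod_cast Fintype.card_ne_zero
  have h4 : M = (Fintype.card S : ℂ)⁻¹ • (Mᴴ * M) := by
    rw [h1, h2, smul_smul, inv_mul_cancel₀ h3, one_smul]
  rw [h4, smul_smul]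
  refine (Matrix.posSemidef_conjTranspose_mul_self M).smul ?_
  have e : ((d : ℂ) ^ n)⁻¹ * (Fintype.card S : ℂ)⁻¹
      = (((((d : ℝ) ^ n)⁻¹ * (Fintype.card S : ℝ)⁻¹ : ℝ)) : ℂ) := by push_cast; rfl
  rw [e]
  exact Complex.zero_le_real.2 (by positivity)

end Helpers

/-- For every `n`-qudit state `ρ`, the set
`Γ = {(p,q) : |Ξ_ρ(p,q)| = 1}` is a subgroup of `V^n` of order `d^r` for some `r ≤ n`,
the Weyl operators with labels in `Γ` mutually commute, and the mean state `M(ρ)` is an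
MSPS; in particular `M(ρ)` is positive semidefinite with trace one. -/
theorem statement0 (d n : ℕ) [Fact (Nat.Prime d)] (hd : Odd d) (hn : 1 ≤ n)
    (ρ : Mat d n) (hρ : IsState d n ρ) :
    (∃ Γ : AddSubgroup (QV d n × QV d n),
        (Γ : Set (QV d n × QV d n)) = {pq | ‖xi d n ρ pq‖ = 1} ∧
        ∃ r : ℕ, r ≤ n ∧ Nat.card Γ = d ^ r) ∧
    (∀ pq pq' : QV d n × QV d n, ‖xi d n ρ pq‖ = 1 →
        ‖xi d n ρ pq'‖ = 1 →
        Commute (weyl d n pq.1 pq.2) (weyl d n pq'.1 pq'.2)) ∧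
    IsMSPS d n (meanState d n ρ) ∧
    (meanState d n ρ).PosSemidef ∧ (meanState d n ρ).trace = 1 := by
  refine ⟨⟨Gam hd hρ, rfl, Module.finrank (ZMod d) (AddSubgroup.toZModSubmodule d (Gam hd hρ)),
    finrank_le _ fun u hu v hv => omg_eq_zero hd hρ hu hv, ?_⟩, ?_, isMSPS_mean hd hρ,
    mean_psd hd hρ, mean_trace hd hρ⟩
  · have := Module.natCard_eq_pow_finrank (K := ZMod d)
      (V := AddSubgroup.toZModSubmodule d (Gam hd hρ))
    rw [Nat.card_zmod] at this
    exact this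
  · intro u v hu hv
    change W u * W v = W v * W u
    rw [W_mul hd, W_mul hd, omg_eq_zero hd hρ hu hv, omg_eq_zero hd hρ hv hu, add_comm]

end PaperQI
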